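/- Let A = ℚ[t₁, t₂] ⊗ Λ(v₁,…,v₅) with deg v₁ = deg v₂ = deg v₃ = 3 and deg v₄ = deg v₅ = 7, and let D be the unique derivation of degree +1 on A with D t₁ = D t₂ = 0, D v₁ = D v₂ = D v₃ = 0, D v₄ = v₁v₂(t₁ + t₂) + t₁⁴ and D v₅ = v₁v₃t₂ + t₂⁴. Then D ∘ D = 0 and dim_ℚ H(A, D) < ∞. -/

import Mathlib

/-!
Write `P = ℚ[t₁, t₂]`. Since `D` kills `t₁` and `t₂`, the Leibniz rule makes `D` a `P`-linear map
(`D_smul`). A `ℚ`-linear subspace containing `1`, stable under `P` and under left multiplication by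
each `vⱼ` is everything (`top_of_stable`), and `ker (D ∘ D)` is such a subspace because every
`D vⱼ` is an even element built from generators killed by `D`.

For finiteness, put `e = v₁v₂(t₁ + t₂)`, so that `D v₄ = e + t₁⁴` with `e² = 0` and `e` a cocycle.
Then `D v₄ · (t₁⁴ - e) = t₁⁸`, so for every cocycle `z` one gets
`t₁⁸ z = D (v₄ (t₁⁴ - e) z)` (`pow_smul_exact`); likewise `t₂⁸ z` is exact, with
`v₁v₃t₂` in place of `e`. Finally `ker D` is a finitely generated `P`-module, as a submodule of the
finite module `A` over the Noetherian ring `P`; modulo exact elements it is spanned over `ℚ` by the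
products of the finitely many `P`-generators with the monomials `t₁ᵃt₂ᵇ`, `a, b < 8`
(`finite_cohomology`).
-/


/- D v₄ = v₁v₂(t₁ + t₂) + t₁⁴, D v₅ = v₁v₃t₂ + t₂⁴ on ℚ[t₁,t₂] ⊗ Λ(v₁,…,v₅), deg v = (3,3,3,7,7). -/

open scoped TensorProduct

set_option synthInstance.maxHeartbeats 1000000
set_option maxHeartbeats 1000000

noncomputable section

/-- The free graded-commutative ℚ-algebra `ℚ[t₁,…,t_r] ⊗ Λ(v₁,…,v_n)`:
the tensor product of a polynomial algebra on `r` generators of degree 2 with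
an exterior algebra on `n` generators of odd degrees. -/
abbrev FGCA (r n : ℕ) : Type :=
  MvPolynomial (Fin r) ℚ ⊗[ℚ] ExteriorAlgebra ℚ (Fin n → ℚ)

/-- The degree-2 polynomial generators `tᵢ`. -/
def tg (r n : ℕ) (i : Fin r) : FGCA r n := (MvPolynomial.X i) ⊗ₜ 1

/-- The odd-degree exterior generators `vⱼ`. -/
def vg (r n : ℕ) (j : Fin n) : FGCA r n :=
  1 ⊗ₜ (ExteriorAlgebra.ι ℚ (Pi.single j (1 : ℚ)))

/-- The monomial `t^α · v_S` (with the exterior factors multiplied in increasing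
order of index).  These monomials form a ℚ-basis of `FGCA r n`. -/
def gmon (r n : ℕ) (α : Fin r →₀ ℕ) (S : Finset (Fin n)) : FGCA r n :=
  (MvPolynomial.monomial α (1 : ℚ)) ⊗ₜ
    ((S.sort (· ≤ ·)).map fun j => ExteriorAlgebra.ι ℚ (Pi.single j (1 : ℚ))).prod

/-- The (cohomological) degree of the monomial `t^α · v_S`, where each `tᵢ` has
degree `2` and each `vⱼ` has degree `dv j`. -/
def gdeg (r n : ℕ) (dv : Fin n → ℕ) (α : Fin r →₀ ℕ) (S : Finset (Fin n)) : ℕ :=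
  (α.sum fun _ k => 2 * k) + S.sum dv

/-- The homogeneous part of degree `k` of `FGCA r n`: the span of the monomials
of degree `k`. -/
def homog (r n : ℕ) (dv : Fin n → ℕ) (k : ℕ) : Submodule ℚ (FGCA r n) :=
  Submodule.span ℚ { a | ∃ α S, gdeg r n dv α S = k ∧ a = gmon r n α S }

/-- The graded Leibniz rule for a degree `+1` derivation `D`:
`D(ab) = D(a)·b + (−1)^(deg a) a·D(b)` for homogeneous `a`. -/
def IsLeibniz (r n : ℕ) (dv : Fin n → ℕ) (D : FGCA r n →ₗ[ℚ] FGCA r n) : Prop :=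
  ∀ (p : ℕ) (a b : FGCA r n), a ∈ homog r n dv p →
    D (a * b) = D a * b + ((-1 : ℚ) ^ p) • (a * D b)

/-- `D` raises (cohomological) degree by `1`. -/
def RaisesDegByOne (r n : ℕ) (dv : Fin n → ℕ) (D : FGCA r n →ₗ[ℚ] FGCA r n) : Prop :=
  ∀ (k : ℕ), ∀ a ∈ homog r n dv k, D a ∈ homog r n dv (k + 1)

/-- The cohomology `H(A, D) = ker D / im D` as a ℚ-vector space, realized as the
image of `ker D` in `A ⧸ im D`. -/
abbrev Cohomology (r n : ℕ) (D : FGCA r n →ₗ[ℚ] FGCA r n) : Type :=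
  (LinearMap.ker D).map (LinearMap.range D).mkQ

end

noncomputable section

local notation "dv" => (![3, 3, 3, 7, 7] : Fin 5 → ℕ)
local notation "t₁" => tg 2 5 0
local notation "t₂" => tg 2 5 1
local notation "v₁" => vg 2 5 0
local notation "v₂" => vg 2 5 1
local notation "v₃" => vg 2 5 2
local notation "v₄" => vg 2 5 3
local notation "v₅" => vg 2 5 4

local notation "Pol" => MvPolynomial (Fin 2) ℚ
local notation "Ext" => ExteriorAlgebra ℚ (Fin 5 → ℚ)

/-! ### Generators and homogeneous elements -/

lemma one_mem_homog (r n : ℕ) (d : Fin n → ℕ) : (1 : FGCA r n) ∈ homog r n d 0 := by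
  refine Submodule.subset_span ⟨0, ∅, ?_, ?_⟩
  · simp [gdeg]
  · simp [gmon, Algebra.TensorProduct.one_def]

lemma tg_mem_homog (r n : ℕ) (d : Fin n → ℕ) (i : Fin r) : tg r n i ∈ homog r n d 2 := by
  refine Submodule.subset_span ⟨Finsupp.single i 1, ∅, ?_, ?_⟩
  · simp [gdeg]
  · simp [gmon, tg, MvPolynomial.X]

lemma vg_mem_homog (r n : ℕ) (d : Fin n → ℕ) (j : Fin n) : vg r n j ∈ homog r n d (d j) := by
  refine Submodule.subset_span ⟨0, {j}, ?_, ?_⟩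
  · simp [gdeg]
  · simp [gmon, vg]

lemma smul_eq_mul' (p : Pol) (b : FGCA 2 5) : p • b = (p ⊗ₜ[ℚ] (1 : Ext)) * b := by
  induction b using TensorProduct.induction_on with
  | zero => simp
  | tmul q x => simp [TensorProduct.smul_tmul']
  | add x y hx hy => rw [smul_add, mul_add, hx, hy]

lemma tg_mul (i : Fin 2) (b : FGCA 2 5) : tg 2 5 i * b = (MvPolynomial.X i : Pol) • b := by
  rw [smul_eq_mul', tg]

lemma mul_smul_comm' (p : Pol) (a b : FGCA 2 5) : a * (p • b) = p • (a * b) := by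
  induction a using TensorProduct.induction_on with
  | zero => simp
  | tmul q x =>
    induction b using TensorProduct.induction_on with
    | zero => simp
    | tmul q' x' => simp [TensorProduct.smul_tmul', mul_left_comm]
    | add x y hx hy => simp only [smul_add, mul_add, hx, hy]
  | add x y hx hy => simp only [smul_add, add_mul, hx, hy]

/-- An induction principle: `A` is generated, as a `ℚ`-space, from `1` by
the action of `P` and by left multiplications with the `vⱼ`. -/
lemma top_of_stable (S : Submodule ℚ (FGCA 2 5)) (h1 : (1 : FGCA 2 5) ∈ S)
    (hP : ∀ (p : Pol), ∀ b ∈ S, p • b ∈ S) (hv : ∀ j, ∀ b ∈ S, vg 2 5 j * b ∈ S)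
    (a : FGCA 2 5) : a ∈ S := by
  have key : ∀ x : Ext, (1 : Pol) ⊗ₜ[ℚ] x ∈ S := by
    intro x
    induction x using CliffordAlgebra.left_induction with
    | algebraMap r =>
      have : (1 : Pol) ⊗ₜ[ℚ] (algebraMap ℚ Ext r) = r • (1 : FGCA 2 5) := by
        rw [Algebra.algebraMap_eq_smul_one, TensorProduct.tmul_smul,
          Algebra.TensorProduct.one_def]
      exact this ▸ S.smul_mem r h1
    | add x y hx hy => rw [TensorProduct.tmul_add]; exact S.add_mem hx hy
    | ι_mul x m hx =>
      have hm : (1 : Pol) ⊗ₜ[ℚ] (ExteriorAlgebra.ι ℚ m * x)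
          = ∑ j, m j • (vg 2 5 j * ((1 : Pol) ⊗ₜ[ℚ] x)) := by
        conv_lhs => rw [pi_eq_sum_univ' m]
        simp only [map_sum, map_smul, Finset.sum_mul, TensorProduct.tmul_sum, smul_mul_assoc,
          TensorProduct.tmul_smul, vg, Algebra.TensorProduct.tmul_mul_tmul, one_mul]
      exact hm ▸ S.sum_mem fun j _ => S.smul_mem _ (hv j _ hx)
  induction a using TensorProduct.induction_on with
  | zero => exact S.zero_mem
  | tmul p x =>
    have : p ⊗ₜ[ℚ] x = p • ((1 : Pol) ⊗ₜ[ℚ] x) := by simp [TensorProduct.smul_tmul']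
    exact this ▸ hP p _ (key x)
  | add x y hx hy => exact S.add_mem hx hy

/-! ### Consequences of the Leibniz rule -/

lemma D_smul (d : Fin 5 → ℕ) (D : FGCA 2 5 →ₗ[ℚ] FGCA 2 5) (hLeib : IsLeibniz 2 5 d D)
    (ht : ∀ i, D (tg 2 5 i) = 0) (p : Pol) (b : FGCA 2 5) : D (p • b) = p • D b := by
  induction p using MvPolynomial.induction_on generalizing b with
  | C a =>
    have : ∀ c : FGCA 2 5, (MvPolynomial.C a : Pol) • c = a • c := fun c => by
      rw [← MvPolynomial.algebraMap_eq, algebraMap_smul]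
    rw [this, this, map_smul]
  | add p q hp hq => rw [add_smul, add_smul, map_add, hp, hq]
  | mul_X p i hp =>
    rw [mul_smul, mul_smul, hp, ← tg_mul, ← tg_mul, hLeib 2 _ _ (tg_mem_homog 2 5 d i), ht i]
    simp

lemma D_vg_mul (d : Fin 5 → ℕ) (hd : ∀ j, Odd (d j)) (D : FGCA 2 5 →ₗ[ℚ] FGCA 2 5)
    (hLeib : IsLeibniz 2 5 d D) (j : Fin 5) (b : FGCA 2 5) :
    D (vg 2 5 j * b) = D (vg 2 5 j) * b + (-1 : ℚ) • (vg 2 5 j * D b) := by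
  rw [hLeib _ _ _ (vg_mem_homog 2 5 d j), (hd j).neg_one_pow]

lemma D_one (d : Fin 5 → ℕ) (D : FGCA 2 5 →ₗ[ℚ] FGCA 2 5) (hLeib : IsLeibniz 2 5 d D) :
    D 1 = 0 := by
  simpa using hLeib 0 1 1 (one_mem_homog 2 5 d)

/-- `D` is linear over even cocycles of the shape `vᵢvⱼp + q`, with `p, q` polynomials and
`D vᵢ = D vⱼ = 0`. -/
lemma D_even_mul (d : Fin 5 → ℕ) (hd : ∀ j, Odd (d j)) (D : FGCA 2 5 →ₗ[ℚ] FGCA 2 5)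
    (hLeib : IsLeibniz 2 5 d D) (ht : ∀ i, D (tg 2 5 i) = 0) (i j : Fin 5)
    (hi : D (vg 2 5 i) = 0) (hj : D (vg 2 5 j) = 0) (p q : Pol) (b : FGCA 2 5) :
    D ((p • (vg 2 5 i * vg 2 5 j) + q • 1) * b)
      = (p • (vg 2 5 i * vg 2 5 j) + q • 1) * D b := by
  simp only [add_mul, smul_mul_assoc, one_mul, map_add, D_smul d D hLeib ht, mul_assoc,
    D_vg_mul d hd D hLeib, hi, hj, zero_mul, zero_add, mul_smul_comm, smul_smul, neg_mul_neg,
    one_smul]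

lemma vg_sq_zero (i j : Fin 5) : (vg 2 5 i * vg 2 5 j) * (vg 2 5 i * vg 2 5 j) = 0 := by
  simp only [vg, Algebra.TensorProduct.tmul_mul_tmul]
  set x : Ext := ExteriorAlgebra.ι ℚ (Pi.single i (1 : ℚ)) with hx
  set y : Ext := ExteriorAlgebra.ι ℚ (Pi.single j (1 : ℚ)) with hy
  have h1 : y * x = -(x * y) := eq_neg_of_add_eq_zero_left (ExteriorAlgebra.ι_add_mul_swap _ _)
  have h2 : x * x = 0 := ExteriorAlgebra.ι_sq_zero _
  have h3 : x * y * (x * y) = 0 := by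
    rw [mul_assoc, ← mul_assoc y, h1, neg_mul, mul_neg, ← mul_assoc, ← mul_assoc, h2]
    simp
  rw [h3, TensorProduct.tmul_zero]

/-- If `D v_k = vᵢvⱼp + q` with `vᵢ, vⱼ` cocycles, then `q²` annihilates cohomology: the element
`q - vᵢvⱼp` is a cocycle and `(q + vᵢvⱼp)(q - vᵢvⱼp) = q²`. -/
lemma pow_smul_exact (d : Fin 5 → ℕ) (hd : ∀ j, Odd (d j)) (D : FGCA 2 5 →ₗ[ℚ] FGCA 2 5)
    (hLeib : IsLeibniz 2 5 d D) (ht : ∀ i, D (tg 2 5 i) = 0) (i j k : Fin 5)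
    (hi : D (vg 2 5 i) = 0) (hj : D (vg 2 5 j) = 0) (p q : Pol)
    (hk : D (vg 2 5 k) = p • (vg 2 5 i * vg 2 5 j) + q • 1) (z : FGCA 2 5) (hz : D z = 0) :
    D (vg 2 5 k * (((-p) • (vg 2 5 i * vg 2 5 j) + q • 1) * z)) = (q ^ 2) • z := by
  rw [D_vg_mul d hd D hLeib, D_even_mul d hd D hLeib ht i j hi hj, hz, mul_zero, mul_zero,
    smul_zero, add_zero, hk, ← mul_assoc]
  have : (p • (vg 2 5 i * vg 2 5 j) + q • 1) * ((-p) • (vg 2 5 i * vg 2 5 j) + q • 1)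
      = (q ^ 2) • (1 : FGCA 2 5) := by
    simp only [add_mul, mul_add, smul_mul_assoc, mul_smul_comm', vg_sq_zero, one_mul, mul_one,
      smul_zero, zero_add, smul_smul]
    rw [← add_assoc, ← add_smul]
    ring_nf
    simp
  rw [this, smul_mul_assoc, one_mul]

/-! ### Finiteness -/

instance finite_ext : Module.Finite ℚ Ext :=
  Module.Finite.of_basis (Pi.basisFun ℚ (Fin 5)).ExteriorAlgebra

/-- A `P`-linear differential on `A` has finite-dimensional cohomology as soon as a power of each
`tᵢ` annihilates it. -/
lemma finite_cohomology (D : FGCA 2 5 →ₗ[ℚ] FGCA 2 5)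
    (hlin : ∀ (p : Pol) b, D (p • b) = p • D b) (N : ℕ)
    (hN : ∀ i, ∀ z, D z = 0 → (MvPolynomial.X i ^ N : Pol) • z ∈ LinearMap.range D) :
    FiniteDimensional ℚ (Cohomology 2 5 D) := by
  let DP : FGCA 2 5 →ₗ[Pol] FGCA 2 5 :=
    { toFun := D, map_add' := D.map_add, map_smul' := hlin }
  have : IsNoetherian Pol (FGCA 2 5) := isNoetherian_of_isNoetherianRing_of_finite _ _
  obtain ⟨G, hG⟩ := IsNoetherian.noetherian (LinearMap.ker DP)
  have hGker : ∀ g ∈ G, D g = 0 := fun g hg => by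
    have : g ∈ LinearMap.ker DP := hG ▸ Submodule.subset_span hg
    exact this
  -- The finitely many products of a generator with a monomial of exponents below `N`.
  let f : (Fin 2 → Fin N) × G → FGCA 2 5 := fun x =>
    (MvPolynomial.monomial (Finsupp.equivFunOnFinite.symm fun i => (x.1 i : ℕ)) (1 : ℚ) : Pol)
      • (x.2 : FGCA 2 5)
  let F : Submodule ℚ (FGCA 2 5) := Submodule.span ℚ (Set.range f)
  have hF : FiniteDimensional ℚ F := FiniteDimensional.span_of_finite ℚ (Set.finite_range f)
  have hmon : ∀ (α : Fin 2 →₀ ℕ) (c : ℚ), ∀ g ∈ G,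
      (MvPolynomial.monomial α c : Pol) • g ∈ F ⊔ LinearMap.range D := by
    intro α c g hg
    by_cases hα : ∀ i, α i < N
    · refine Submodule.mem_sup_left ?_
      have : (MvPolynomial.monomial α c : Pol) • g = c • f (fun i => ⟨α i, hα i⟩, ⟨g, hg⟩) := by
        have h2 : (MvPolynomial.monomial α c : Pol) = c • MvPolynomial.monomial α 1 := by
          rw [MvPolynomial.smul_monomial, smul_eq_mul, mul_one]
        have h3 : (Finsupp.equivFunOnFinite.symm fun i => α i) = α := by ext; simp
        simp only [f, h3]
        rw [h2, smul_assoc]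
      rw [this]
      exact F.smul_mem _ (Submodule.subset_span ⟨_, rfl⟩)
    · refine Submodule.mem_sup_right ?_
      push Not at hα
      obtain ⟨i, hi⟩ := hα
      have h2 : (MvPolynomial.monomial α c : Pol)
          = MvPolynomial.X i ^ N * MvPolynomial.monomial (α - Finsupp.single i N) c := by
        rw [MvPolynomial.X_pow_eq_monomial, MvPolynomial.monomial_mul, one_mul,
          add_tsub_cancel_of_le (Finsupp.single_le_iff.2 hi)]
      rw [h2, mul_smul]
      exact hN i _ (by rw [hlin, hGker g hg, smul_zero])
  have hpol : ∀ (p : Pol), ∀ g ∈ G, p • g ∈ F ⊔ LinearMap.range D := by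
    intro p g hg
    induction p using MvPolynomial.induction_on' with
    | monomial α c => exact hmon α c g hg
    | add p q hp hq => rw [add_smul]; exact Submodule.add_mem _ hp hq
  have hker : LinearMap.ker D ≤ F ⊔ LinearMap.range D := by
    intro z hz
    have hz' : z ∈ Submodule.span Pol (G : Set (FGCA 2 5)) := 
      hG ▸ (show z ∈ LinearMap.ker DP from hz)
    rw [Submodule.mem_span_finset'] at hz'
    obtain ⟨c, rfl⟩ := hz'
    exact Submodule.sum_mem _ fun g _ => hpol _ _ g.2
  have hle : (LinearMap.ker D).map (LinearMap.range D).mkQ ≤ F.map (LinearMap.range D).mkQ := by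
    refine (Submodule.map_mono hker).trans ?_
    rw [Submodule.map_sup, Submodule.mkQ_map_self, sup_bot_eq]
  exact Submodule.finiteDimensional_of_le hle

theorem stmt_9 (D : FGCA 2 5 →ₗ[ℚ] FGCA 2 5)
    (hLeib : IsLeibniz 2 5 dv D)
    (hdeg : RaisesDegByOne 2 5 dv D)
    (hD0 : D t₁ = (0 : FGCA 2 5))
    (hD1 : D t₂ = (0 : FGCA 2 5))
    (hD2 : D v₁ = (0 : FGCA 2 5))
    (hD3 : D v₂ = (0 : FGCA 2 5))
    (hD4 : D v₃ = (0 : FGCA 2 5))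
    (hD5 : D v₄ = v₁ * v₂ * (t₁ + t₂) + t₁ ^ 4)
    (hD6 : D v₅ = v₁ * v₃ * t₂ + t₂ ^ 4)
    : D ∘ₗ D = 0 ∧ FiniteDimensional ℚ (Cohomology 2 5 D) := by
  have hd : ∀ j, Odd (dv j) := by
    intro j
    fin_cases j <;> decide
  have ht : ∀ i, D (tg 2 5 i) = 0 := by
    intro i
    fin_cases i
    · exact hD0
    · exact hD1
  have htg : ∀ i, tg 2 5 i = (MvPolynomial.X i : Pol) • (1 : FGCA 2 5) := fun i => by
    rw [← tg_mul, mul_one]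
  have htp : ∀ i (n : ℕ), tg 2 5 i ^ n = (MvPolynomial.X i ^ n : Pol) • (1 : FGCA 2 5) :=
    fun i n => by rw [htg, smul_pow, one_pow]
  have h4 : D v₄ = (MvPolynomial.X 0 + MvPolynomial.X 1 : Pol) • (v₁ * v₂)
      + (MvPolynomial.X 0 ^ 4 : Pol) • 1 := by
    rw [hD5, htp, htg, htg, ← add_smul, mul_smul_comm', mul_one]
  have h5 : D v₅ = (MvPolynomial.X 1 : Pol) • (v₁ * v₃) + (MvPolynomial.X 1 ^ 4 : Pol) • 1 := by
    rw [hD6, htp, htg, mul_smul_comm', mul_one]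
  have hlin := D_smul dv D hLeib ht
  constructor
  · have hDv : ∀ j b, D (D (vg 2 5 j) * b) = D (vg 2 5 j) * D b := by
      intro j b
      fin_cases j
      · simp [hD2]
      · simp [hD3]
      · simp [hD4]
      · change D (D v₄ * b) = D v₄ * D b
        rw [h4, D_even_mul dv hd D hLeib ht 0 1 hD2 hD3]
      · change D (D v₅ * b) = D v₅ * D b
        rw [h5, D_even_mul dv hd D hLeib ht 0 2 hD2 hD4]
    refine LinearMap.ext fun a => ?_
    refine top_of_stable (LinearMap.ker (D ∘ₗ D)) ?_ ?_ ?_ a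
    · simp [D_one dv D hLeib]
    · intro p b hb
      simp only [LinearMap.mem_ker, LinearMap.comp_apply] at hb ⊢
      rw [hlin, hlin, hb, smul_zero]
    · intro j b hb
      simp only [LinearMap.mem_ker, LinearMap.comp_apply] at hb ⊢
      rw [D_vg_mul dv hd D hLeib, map_add, map_smul, hDv, D_vg_mul dv hd D hLeib, hb, mul_zero,
        smul_zero, add_zero]
      module
  · refine finite_cohomology D hlin 8 fun i z hz => ?_
    fin_cases i
    · refine ⟨_, (pow_smul_exact dv hd D hLeib ht 0 1 3 hD2 hD3 _ _ h4 z hz).trans ?_⟩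
      rw [← pow_mul]
      rfl
    · refine ⟨_, (pow_smul_exact dv hd D hLeib ht 0 2 4 hD2 hD4 _ _ h5 z hz).trans ?_⟩
      rw [← pow_mul]
      rfl

end
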